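/- Let μ and ν be discrete probability distributions concentrated on the non-negative integers with finite first moments, let F, G be their distribution functions, and let D(i) = Σ_{j=0}^{i} (G−F)(j)·(G−F)(i−j) for i ∈ ℕ (with D(i) = 0 for i < 0). Then for every integer i ≥ 0 and every x ∈ [i, i+1]: ((G−F)*(G−F))(x) = (x−i)·D(i) + (i+1−x)·D(i−1). Consequently, ((G−F)*(G−F))(x) ≥ 0 for all x ∈ ℝ if and only if D(i) ≥ 0 for all i ∈ ℕ. -/

import Mathlib

open MeasureTheory Set

noncomputable def distFun (μ : Measure ℝ) (x : ℝ) : ℝ := (μ (Set.Iic x)).toReal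

/-- Convolution of two real functions with respect to Lebesgue measure. -/
noncomputable def fconv (h₁ h₂ : ℝ → ℝ) (A : ℝ) : ℝ := ∫ t, h₁ t * h₂ (A - t)

/-- Convex order for finite Borel measures on ℝ. -/
def ConvexOrder (μ ν : Measure ℝ) : Prop :=
  ∀ φ : ℝ → ℝ, ConvexOn ℝ Set.univ φ → Integrable φ μ → Integrable φ ν →
    ∫ x, φ x ∂μ ≤ ∫ x, φ x ∂ν

/-- Usual stochastic order: `μ ≤ₛₜ ν`. -/
def StochOrder (μ ν : Measure ℝ) : Prop :=
  μ Set.univ = ν Set.univ ∧ ∀ x : ℝ, distFun ν x ≤ distFun μ x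

/-- k-fold convolution power of a measure. -/
noncomputable def convPow (μ : Measure ℝ) : ℕ → Measure ℝ
  | 0 => Measure.dirac 0
  | n + 1 => Measure.conv (convPow μ n) μ

/-- Convolution of a list of measures. -/
noncomputable def convList : List (Measure ℝ) → Measure ℝ
  | [] => Measure.dirac 0
  | m :: l => Measure.conv m (convList l)

/-- Convolution polynomial of measures associated with a multivariate polynomial
with non-negative coefficients. -/
noncomputable def convPoly {m : ℕ} (P : MvPolynomial (Fin m) ℝ) (μ : Fin m → Measure ℝ) :
    Measure ℝ :=
  ∑ d ∈ P.support,
    ENNReal.ofReal (MvPolynomial.coeff d P) • convList (List.ofFn fun i => convPow (μ i) (d i))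

lemma distFun_step (μ : Measure ℝ) (hμc : μ (Set.range (fun k : ℕ => (k : ℝ)))ᶜ = 0)
    (n : ℤ) (t : ℝ) (h1 : (n : ℝ) ≤ t) (h2 : t < n + 1) : distFun μ t = distFun μ n := by
  unfold distFun
  congr 1
  apply le_antisymm
  · have hsub : Iic t ⊆ Iic (n : ℝ) ∪ (Set.range (fun k : ℕ => (k : ℝ)))ᶜ := by
      intro y hy
      by_cases hr : y ∈ Set.range (fun k : ℕ => (k : ℝ))
      · left
        obtain ⟨k, rfl⟩ := hr
        simp only [mem_Iic] at hy ⊢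
        have : ((k : ℤ) : ℝ) < ((n + 1 : ℤ) : ℝ) := by push_cast; linarith
        have h3 : (k : ℤ) < n + 1 := by exact_mod_cast this
        have h4 : (k : ℤ) ≤ n := by omega
        exact_mod_cast h4
      · right; exact hr
    calc μ (Iic t) ≤ _ := measure_mono hsub
      _ ≤ _ := measure_union_le _ _
      _ = _ := by rw [hμc, add_zero]
  · exact measure_mono (Iic_subset_Iic.2 h1)

lemma distFun_neg (μ : Measure ℝ) (hμc : μ (Set.range (fun k : ℕ => (k : ℝ)))ᶜ = 0)
    (t : ℝ) (h : t < 0) : distFun μ t = 0 := by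
  unfold distFun
  have : μ (Iic t) = 0 := by
    refine measure_mono_null ?_ hμc
    rintro y hy ⟨k, rfl⟩
    simp only [mem_Iic] at hy
    have : (0 : ℝ) ≤ k := k.cast_nonneg
    linarith
  simp [this]

lemma integral_const_Ioo (f : ℝ → ℝ) (a b c : ℝ) (hab : a ≤ b) (h : ∀ t ∈ Ioo a b, f t = c) :
    IntervalIntegrable f volume a b ∧ ∫ t in a..b, f t = (b - a) * c := by
  have hae : ∀ᵐ t ∂volume.restrict (Ioc a b), f t = c := by
    rw [← restrict_Ioo_eq_restrict_Ioc]
    exact (ae_restrict_iff' measurableSet_Ioo).2 (Filter.Eventually.of_forall h)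
  constructor
  · rw [intervalIntegrable_iff_integrableOn_Ioc_of_le hab]
    have : IntegrableOn (fun _ : ℝ => c) (Ioc a b) :=
      integrableOn_const (by simp) (by simp)
    exact Integrable.congr this (hae.mono fun t ht => ht.symm)
  · rw [intervalIntegral.integral_of_le hab, integral_congr_ae hae]
    simp [hab]

lemma fconv_formula (d : ℝ → ℝ) (hneg : ∀ t < 0, d t = 0)
    (hstep : ∀ (n : ℤ) (t : ℝ), (n : ℝ) ≤ t → t < n + 1 → d t = d n)
    (i : ℕ) (x : ℝ) (hx : x ∈ Icc (i : ℝ) (i + 1)) :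
    fconv d d x = (x - i) * (∑ j ∈ Finset.range (i + 1), d (j : ℝ) * d ((i : ℝ) - j))
      + (i + 1 - x) * (∑ j ∈ Finset.range (i + 1), d (j : ℝ) * d ((i : ℝ) - j - 1)) := by
  obtain ⟨hx1, hx2⟩ := hx
  have hpiece : ∀ j : ℕ,
      IntervalIntegrable (fun t => d t * d (x - t)) volume (j : ℝ) ((j + 1 : ℕ) : ℝ) ∧
      ∫ t in (j : ℝ)..((j + 1 : ℕ) : ℝ), d t * d (x - t) =
        (x - i) * (d (j : ℝ) * d ((i : ℝ) - j)) + (i + 1 - x) * (d j * d ((i : ℝ) - j - 1)) := by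
    intro j
    obtain ⟨A1, A2⟩ := integral_const_Ioo (fun t => d t * d (x - t)) j (j + (x - i))
      (d j * d ((i : ℝ) - j)) (by linarith) (by
        rintro t ⟨h1, h2⟩
        have e1 := hstep j t (by push_cast; linarith) (by push_cast; linarith)
        have e2 := hstep (i - j) (x - t) (by push_cast; linarith) (by push_cast; linarith)
        push_cast at e1 e2
        simp only [e1, e2])
    obtain ⟨B1, B2⟩ := integral_const_Ioo (fun t => d t * d (x - t)) (j + (x - i)) ((j + 1 : ℕ) : ℝ)
      (d j * d ((i : ℝ) - j - 1)) (by push_cast; linarith) (by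
        rintro t ⟨h1, h2⟩
        push_cast at h2
        have e1 := hstep j t (by push_cast; linarith) (by push_cast; linarith)
        have e2 := hstep (i - j - 1) (x - t) (by push_cast; linarith) (by push_cast; linarith)
        push_cast at e1 e2
        simp only [e1, e2])
    refine ⟨A1.trans B1, ?_⟩
    rw [← intervalIntegral.integral_add_adjacent_intervals A1 B1, A2, B2]
    push_cast
    ring
  have hsum := intervalIntegral.sum_integral_adjacent_intervals (μ := volume)
    (f := fun t => d t * d (x - t)) (a := fun k : ℕ => (k : ℝ)) (n := i + 1)
    (fun k _ => (hpiece k).1)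
  have hfull : fconv d d x = ∫ t in ((0 : ℕ) : ℝ)..((i + 1 : ℕ) : ℝ), d t * d (x - t) := by
    unfold fconv
    rw [intervalIntegral.integral_of_le (by push_cast; positivity), ← integral_Icc_eq_integral_Ioc]
    symm
    apply setIntegral_eq_integral_of_forall_compl_eq_zero
    intro t ht
    by_cases h0 : t < 0
    · rw [hneg t h0, zero_mul]
    · rw [hneg (x - t), mul_zero]
      by_contra hc
      exact ht ⟨by push_cast; linarith, by push_cast; linarith⟩
  rw [hfull, ← hsum, Finset.sum_congr rfl (fun k _ => (hpiece k).2), Finset.sum_add_distrib,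
    Finset.mul_sum, Finset.mul_sum]

/-- For discrete probability distributions μ, ν on the non-negative
integers with finite first moments, the convolution (G−F)∗(G−F) interpolates linearly
between the discrete convolution coefficients D(i); consequently (G−F)∗(G−F) ≥ 0
everywhere iff all D(i) ≥ 0. -/
theorem stmt8 (μ ν : Measure ℝ) [IsProbabilityMeasure μ] [IsProbabilityMeasure ν]
    (hμc : μ (Set.range (fun k : ℕ => (k : ℝ)))ᶜ = 0)
    (hνc : ν (Set.range (fun k : ℕ => (k : ℝ)))ᶜ = 0)
    (hμ1 : Integrable (fun x : ℝ => |x|) μ) (hν1 : Integrable (fun x : ℝ => |x|) ν)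
    (d : ℝ → ℝ) (hd : d = fun t => distFun ν t - distFun μ t)
    (D : ℕ → ℝ) (hD : D = fun i => ∑ j ∈ Finset.range (i + 1),
      d (j : ℝ) * d (((i - j : ℕ) : ℝ))) :
    (∀ i : ℕ, ∀ x ∈ Set.Icc (i : ℝ) ((i : ℝ) + 1),
        fconv d d x = (x - (i : ℝ)) * D i +
          ((i : ℝ) + 1 - x) * (if i = 0 then 0 else D (i - 1))) ∧
      ((∀ x : ℝ, 0 ≤ fconv d d x) ↔ ∀ i : ℕ, 0 ≤ D i) := by
  have hneg : ∀ t < 0, d t = 0 := by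
    intro t ht
    rw [hd]
    simp only [distFun_neg μ hμc t ht, distFun_neg ν hνc t ht, sub_zero]
  have hstep : ∀ (n : ℤ) (t : ℝ), (n : ℝ) ≤ t → t < n + 1 → d t = d n := by
    intro n t h1 h2
    rw [hd]
    simp only [distFun_step μ hμc n t h1 h2, distFun_step ν hνc n t h1 h2]
  have hD' : ∀ i : ℕ, D i = ∑ j ∈ Finset.range (i + 1), d (j : ℝ) * d ((i : ℝ) - j) := by
    intro i
    rw [hD]
    apply Finset.sum_congr rfl
    intro j hj
    have : j ≤ i := by have := Finset.mem_range.1 hj; omega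
    rw [Nat.cast_sub this]
  have key : ∀ i : ℕ, ∀ x ∈ Set.Icc (i : ℝ) ((i : ℝ) + 1),
        fconv d d x = (x - (i : ℝ)) * D i +
          ((i : ℝ) + 1 - x) * (if i = 0 then 0 else D (i - 1)) := by
    intro i x hx
    rw [fconv_formula d hneg hstep i x hx, hD' i]
    congr 2
    rw [Finset.sum_range_succ, hneg ((i : ℝ) - i - 1) (by linarith), mul_zero, add_zero]
    rcases i with _ | i
    · simp
    · simp only [Nat.add_eq_zero_iff, one_ne_zero, and_false, if_false, Nat.add_sub_cancel]
      rw [hD' i]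
      apply Finset.sum_congr rfl
      intro j _
      congr 2
      push_cast
      ring
  refine ⟨key, ?_, ?_⟩
  · intro h i
    have h1 := key i (i + 1) ⟨by linarith, le_refl _⟩
    have h2 := h (i + 1)
    rw [h1] at h2
    simpa using h2
  · intro h x
    by_cases hx : x < 0
    · have : fconv d d x = 0 := by
        unfold fconv
        have : ∀ t, d t * d (x - t) = 0 := by
          intro t
          by_cases h0 : t < 0
          · rw [hneg t h0, zero_mul]
          · rw [hneg (x - t) (by linarith), mul_zero]
        simp [this]
      rw [this]
    · have h1 := Nat.floor_le (not_lt.1 hx)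
      have h2 := (Nat.lt_floor_add_one x).le
      rw [key ⌊x⌋₊ x ⟨h1, h2⟩]
      apply add_nonneg
      · exact mul_nonneg (by linarith) (h _)
      · apply mul_nonneg (by linarith)
        split_ifs
        · exact le_refl _
        · exact h _
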